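/- In the multi-agent Gaussian estimation problem, the minimum expected team estimation error (achieved by the strategy ẑ_i = L_i x̂_0 + F_i ỹ_i with vec(F_1,…,F_n) = Γ⁻¹ η) equals J* = Tr( Lᵀ S L P_0 ) − ηᵀ Γ⁻¹ η, where P_0 = Var(x − x̂_0), η = vec(S_{1•} L Θ̂_1, …, S_{n•} L Θ̂_n) with S_{i•} L = Σ_j S_ij L_j, and Γ is the block matrix with blocks Γ_ij = Σ̂_ij ⊗ S_ij. -/

import Mathlib

open MeasureTheory ProbabilityTheory Matrix

/-! Write `e = x - x̂₀`, `w = L e - F ỹ` with `F = diag(F₁, …, Fₙ)`, and `Σ̂ = E[ỹ ỹᵀ]`. The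
equation `Γ vec(F₁, …, Fₙ) = η` says exactly that every diagonal block of `E[S w ỹᵀ]`
vanishes. Since `w` is orthogonal to `y₀` anyway, joint Gaussianity turns this into independence of
the block `(S w)ᵢ` from the pair `(y₀, yᵢ)`. A deviation of the `i`-th decision is a function of
that pair, hence is orthogonal to `(S w)ᵢ`, and `S ⪰ 0` makes `w` the minimizer of the quadratic
error.

`Γ` is invertible because `vec(F)ᵀ Γ vec(F) = Tr(S F Σ̂ Fᵀ)`: for `S ≻ 0` this vanishes only if
`F Σ̂ Fᵀ = 0`, whose diagonal blocks `Fᵢ Σ̂ᵢᵢ Fᵢᵀ` force `Fᵢ = 0`. -/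

section TraceInequality

open scoped MatrixOrder

variable {m : Type*} [Fintype m] {A B : Matrix m m ℝ}

theorem trace_mul_nonneg_of_posSemidef (hA : A.PosSemidef) (hB : B.PosSemidef) :
    0 ≤ (A * B).trace := by
  classical
  obtain ⟨R, rfl⟩ := CStarAlgebra.nonneg_iff_eq_star_mul_self.1 hA.nonneg
  rw [Matrix.mul_assoc, trace_mul_comm]
  exact (hB.mul_mul_conjTranspose_same R).trace_nonneg

theorem eq_zero_of_trace_mul_eq_zero_of_posDef (hA : A.PosDef) (hB : B.PosSemidef)
    (h : (A * B).trace = 0) : B = 0 := by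
  classical
  obtain ⟨R, rfl⟩ := CStarAlgebra.nonneg_iff_eq_star_mul_self.1 hA.posSemidef.nonneg
  have hR : IsUnit R := by
    have hdet := (isUnit_iff_isUnit_det _).1 hA.isUnit
    rw [det_mul] at hdet
    exact (isUnit_iff_isUnit_det R).2 (isUnit_of_mul_isUnit_right hdet)
  rw [Matrix.mul_assoc, trace_mul_comm] at h
  have h0 : R * B * star R = 0 := (hB.mul_mul_conjTranspose_same R).trace_eq_zero_iff.1 h
  exact hR.mul_right_eq_zero.1 (hR.star.mul_left_eq_zero.1 h0)

theorem eq_zero_of_mul_mul_conjTranspose_eq_zero {l : Type*} [Finite l] {F : Matrix l m ℝ}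
    (hA : A.PosDef) (h : F * A * Fᴴ = 0) : F = 0 := by
  have := Fintype.ofFinite l
  refine conjTranspose_mul_self_eq_zero.1
    (eq_zero_of_trace_mul_eq_zero_of_posDef hA (posSemidef_conjTranspose_mul_self F) ?_)
  rw [trace_mul_comm, Matrix.mul_assoc, trace_mul_comm, h, trace_zero]

end TraceInequality

section KhatriRao

open scoped Kronecker

variable {ι R : Type*} {κ ζ : ι → Type*}

/-- The block Khatri–Rao product of two partitioned square matrices: its `(i, j)` block is the
Kronecker product `Cᵢⱼ ⊗ Sᵢⱼ`. -/
def khatriRao [Mul R] (C : Matrix (Σ i, κ i) (Σ i, κ i) R) (S : Matrix (Σ i, ζ i) (Σ i, ζ i) R) :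
    Matrix (Σ i, κ i × ζ i) (Σ i, κ i × ζ i) R :=
  (C ⊗ₖ S).submatrix (fun p => (⟨p.1, p.2.1⟩, ⟨p.1, p.2.2⟩)) fun p => (⟨p.1, p.2.1⟩, ⟨p.1, p.2.2⟩)

/-- The stacked columnwise vectorization `vec (F₁, …, Fₙ)` of a family of matrices. -/
def blockVec (F : ∀ i, Matrix (ζ i) (κ i) R) : (Σ i, κ i × ζ i) → R :=
  fun p => vec (F p.1) p.2

theorem blockVec_injective :
    Function.Injective (blockVec : (∀ i, Matrix (ζ i) (κ i) R) → _) :=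
  fun _ _ h => funext fun i => Matrix.ext fun r c => congrFun h ⟨i, c, r⟩

theorem blockVec_surjective :
    Function.Surjective (blockVec : (∀ i, Matrix (ζ i) (κ i) R) → _) :=
  fun f => ⟨fun i => .of fun r c => f ⟨i, c, r⟩, rfl⟩

theorem blockVec_blockDiag'_mul_mul_apply [NonUnitalNonAssocSemiring R] [Fintype ι]
    [∀ i, Fintype (ζ i)] {δ : Type*} [Fintype δ]
    (S : Matrix (Σ i, ζ i) (Σ i, ζ i) R) (L : Matrix (Σ i, ζ i) δ R) (M : Matrix δ (Σ i, κ i) R)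
    (i : ι) (c : κ i) (r : ζ i) :
    blockVec (blockDiag' (S * L * M)) ⟨i, c, r⟩
      = ((∑ j, S.submatrix (Sigma.mk i) (Sigma.mk j) * L.submatrix (Sigma.mk j) id)
          * M.submatrix id (Sigma.mk i)) r c := by
  simp only [blockVec, vec, blockDiag'_apply, mul_apply, Matrix.sum_apply, submatrix_apply, id,
    Fintype.sum_sigma]

section BlockDiagonal

variable [Fintype ι] [DecidableEq ι] [∀ i, Fintype (κ i)]

theorem blockDiag'_blockDiagonal'_mul_mul [CommSemiring R] (F : ∀ i, Matrix (ζ i) (κ i) R)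
    (C : Matrix (Σ i, κ i) (Σ i, κ i) R) (i : ι) :
    blockDiag' (blockDiagonal' F * C * (blockDiagonal' F)ᵀ) i = F i * blockDiag' C i * (F i)ᵀ := by
  ext r r'
  simp only [blockDiag'_apply, mul_apply, transpose_apply, Fintype.sum_sigma, blockDiagonal'_apply]
  rw [Finset.sum_eq_single i (fun k _ hk => by simp [hk.symm]) (by simp)]
  refine Finset.sum_congr rfl fun c _ => ?_
  rw [Finset.sum_eq_single i (fun k _ hk => by simp [hk.symm]) (by simp)]
  simp

variable [∀ i, Fintype (ζ i)]

theorem khatriRao_mulVec_blockVec [CommSemiring R] (C : Matrix (Σ i, κ i) (Σ i, κ i) R)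
    (S : Matrix (Σ i, ζ i) (Σ i, ζ i) R) (F : ∀ i, Matrix (ζ i) (κ i) R) :
    khatriRao C S *ᵥ blockVec F = blockVec (blockDiag' (S * blockDiagonal' F * Cᵀ)) := by
  ext ⟨i, c, r⟩
  simp only [mulVec, dotProduct, khatriRao, blockVec, vec, blockDiag'_apply, mul_apply,
    submatrix_apply, kroneckerMap_apply, transpose_apply, Fintype.sum_sigma,
    Fintype.sum_prod_type, Finset.sum_mul, blockDiagonal'_apply]
  refine Finset.sum_congr rfl fun j _ => Finset.sum_congr rfl fun c' _ => ?_
  rw [Finset.sum_eq_single j (fun k _ hk => by simp [hk]) (by simp)]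
  exact Finset.sum_congr rfl fun r' _ => by simp only [dite_true, cast_eq]; ring

theorem blockVec_blockDiag'_dotProduct_blockVec [CommSemiring R]
    (M : Matrix (Σ i, ζ i) (Σ i, κ i) R) (F : ∀ i, Matrix (ζ i) (κ i) R) :
    blockVec (blockDiag' M) ⬝ᵥ blockVec F = (M * (blockDiagonal' F)ᵀ).trace := by
  simp only [dotProduct, blockVec, vec, blockDiag'_apply, trace, diag_apply, mul_apply,
    transpose_apply, Fintype.sum_sigma, Fintype.sum_prod_type, blockDiagonal'_apply]
  refine Finset.sum_congr rfl fun i _ => ?_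
  rw [Finset.sum_comm]
  refine Finset.sum_congr rfl fun r _ => ?_
  rw [Finset.sum_eq_single i (fun k _ hk => by simp [hk.symm]) (by simp)]
  simp

theorem blockVec_dotProduct_khatriRao_mulVec [CommSemiring R] (C : Matrix (Σ i, κ i) (Σ i, κ i) R)
    (S : Matrix (Σ i, ζ i) (Σ i, ζ i) R) (F : ∀ i, Matrix (ζ i) (κ i) R) :
    blockVec F ⬝ᵥ khatriRao C S *ᵥ blockVec F
      = (S * (blockDiagonal' F * Cᵀ * (blockDiagonal' F)ᵀ)).trace := by
  rw [khatriRao_mulVec_blockVec, dotProduct_comm, blockVec_blockDiag'_dotProduct_blockVec]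
  simp only [Matrix.mul_assoc]

end BlockDiagonal

theorem khatriRao_posDef [Finite ι] [∀ i, Finite (κ i)] [∀ i, Finite (ζ i)]
    {C : Matrix (Σ i, κ i) (Σ i, κ i) ℝ} {S : Matrix (Σ i, ζ i) (Σ i, ζ i) ℝ}
    (hC : C.PosSemidef) (hCdiag : ∀ i, (blockDiag' C i).PosDef) (hS : S.PosDef) :
    (khatriRao C S).PosDef := by
  classical
  have := Fintype.ofFinite ι
  have (i : ι) := Fintype.ofFinite (κ i)
  have (i : ι) := Fintype.ofFinite (ζ i)
  have hΓ : (khatriRao C S).PosSemidef := (hC.kronecker hS.posSemidef).submatrix _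
  refine .of_dotProduct_mulVec_pos hΓ.isHermitian fun f hf => ?_
  refine (hΓ.dotProduct_mulVec_nonneg f).lt_of_ne' fun h0 => hf ?_
  obtain ⟨F, rfl⟩ := blockVec_surjective f
  rw [star_trivial, blockVec_dotProduct_khatriRao_mulVec, ← conjTranspose_eq_transpose_of_trivial,
    hC.isHermitian.eq, ← conjTranspose_eq_transpose_of_trivial] at h0
  have hFCF : blockDiagonal' F * C * (blockDiagonal' F)ᴴ = 0 :=
    eq_zero_of_trace_mul_eq_zero_of_posDef hS (hC.mul_mul_conjTranspose_same _) h0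
  have hF (i : ι) : F i = 0 := by
    refine eq_zero_of_mul_mul_conjTranspose_eq_zero (hCdiag i) ?_
    rw [conjTranspose_eq_transpose_of_trivial] at hFCF ⊢
    rw [← blockDiag'_blockDiagonal'_mul_mul, hFCF, blockDiag'_zero, Pi.zero_apply]
  funext p
  simp [blockVec, hF]

end KhatriRao

section SecondMoment

variable {Ω α β γ : Type*} [MeasurableSpace Ω] {μ : Measure Ω}

/-- The second-moment matrix `E[U Vᵀ]`, which is `Cov(U, V)` when `U` or `V` is centered. -/
noncomputable def secondMoment (μ : Measure Ω) (U : Ω → α → ℝ) (V : Ω → β → ℝ) : Matrix α β ℝ :=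
  .of fun i j => ∫ ω, U ω i * V ω j ∂μ

theorem secondMoment_apply (U : Ω → α → ℝ) (V : Ω → β → ℝ) (i : α) (j : β) :
    secondMoment μ U V i j = ∫ ω, U ω i * V ω j ∂μ := rfl

theorem transpose_secondMoment (U : Ω → α → ℝ) (V : Ω → β → ℝ) :
    (secondMoment μ U V)ᵀ = secondMoment μ V U := by
  ext i j
  simp only [transpose_apply, secondMoment_apply, mul_comm]

variable [Fintype α] [Fintype β]

theorem integrable_eval_mul_eval {U : Ω → α → ℝ} {V : Ω → β → ℝ} (hU : MemLp U 2 μ)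
    (hV : MemLp V 2 μ) (i : α) (j : β) : Integrable (fun ω => U ω i * V ω j) μ :=
  (hU.eval i).integrable_mul (hV.eval j)

theorem memLp_mulVec [Fintype γ] {U : Ω → α → ℝ} {p : ENNReal} (hU : MemLp U p μ)
    (A : Matrix γ α ℝ) :
    MemLp (fun ω => A *ᵥ U ω) p μ :=
  A.mulVecLin.toContinuousLinearMap.comp_memLp' hU

theorem secondMoment_add_left {U U' : Ω → α → ℝ} {V : Ω → β → ℝ} (hU : MemLp U 2 μ)
    (hU' : MemLp U' 2 μ) (hV : MemLp V 2 μ) :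
    secondMoment μ (U + U') V = secondMoment μ U V + secondMoment μ U' V := by
  ext i j
  simp only [secondMoment_apply, Matrix.add_apply, Pi.add_apply, add_mul]
  exact integral_add (integrable_eval_mul_eval hU hV i j) (integrable_eval_mul_eval hU' hV i j)

theorem secondMoment_mulVec_left (A : Matrix γ α ℝ) {U : Ω → α → ℝ} {V : Ω → β → ℝ}
    (hU : MemLp U 2 μ) (hV : MemLp V 2 μ) :
    secondMoment μ (fun ω => A *ᵥ U ω) V = A * secondMoment μ U V := by
  ext i j
  simp only [secondMoment_apply, mulVec, dotProduct, Finset.sum_mul, mul_apply, mul_assoc]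
  rw [integral_finsetSum _ fun k _ => (integrable_eval_mul_eval hU hV k j).const_mul _]
  simp only [integral_const_mul]

theorem secondMoment_sub_left {U U' : Ω → α → ℝ} {V : Ω → β → ℝ} (hU : MemLp U 2 μ)
    (hU' : MemLp U' 2 μ) (hV : MemLp V 2 μ) :
    secondMoment μ (U - U') V = secondMoment μ U V - secondMoment μ U' V := by
  ext i j
  simp only [secondMoment_apply, Matrix.sub_apply, Pi.sub_apply, sub_mul]
  exact integral_sub (integrable_eval_mul_eval hU hV i j) (integrable_eval_mul_eval hU' hV i j)

theorem secondMoment_add_right {U : Ω → α → ℝ} {V V' : Ω → β → ℝ} (hU : MemLp U 2 μ)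
    (hV : MemLp V 2 μ) (hV' : MemLp V' 2 μ) :
    secondMoment μ U (V + V') = secondMoment μ U V + secondMoment μ U V' := by
  simp only [← transpose_secondMoment _ U, secondMoment_add_left hV hV' hU, transpose_add]

theorem secondMoment_sub_right {U : Ω → α → ℝ} {V V' : Ω → β → ℝ} (hU : MemLp U 2 μ)
    (hV : MemLp V 2 μ) (hV' : MemLp V' 2 μ) :
    secondMoment μ U (V - V') = secondMoment μ U V - secondMoment μ U V' := by
  simp only [← transpose_secondMoment _ U, secondMoment_sub_left hV hV' hU, transpose_sub]

theorem secondMoment_mulVec_right (B : Matrix γ β ℝ) {U : Ω → α → ℝ} {V : Ω → β → ℝ}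
    (hU : MemLp U 2 μ) (hV : MemLp V 2 μ) :
    secondMoment μ U (fun ω => B *ᵥ V ω) = secondMoment μ U V * Bᵀ := by
  rw [← transpose_secondMoment, secondMoment_mulVec_left B hV hU, transpose_mul,
    transpose_secondMoment]

theorem integral_dotProduct_mulVec_self (S : Matrix α α ℝ) {U : Ω → α → ℝ} (hU : MemLp U 2 μ) :
    ∫ ω, U ω ⬝ᵥ S *ᵥ U ω ∂μ = (S * secondMoment μ U U).trace := by
  rw [← secondMoment_mulVec_left S hU hU]
  simp only [dotProduct, trace, diag_apply, secondMoment_apply]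
  rw [integral_finsetSum _ fun i _ => integrable_eval_mul_eval hU (memLp_mulVec hU S) i i]
  simp only [mul_comm]

theorem posSemidef_secondMoment_self {U : Ω → α → ℝ} (hU : MemLp U 2 μ) :
    (secondMoment μ U U).PosSemidef := by
  refine .of_dotProduct_mulVec_nonneg (transpose_secondMoment U U) fun a => ?_
  have hquad : star a ⬝ᵥ secondMoment μ U U *ᵥ a = ∫ ω, (a ⬝ᵥ U ω) ^ 2 ∂μ := by
    rw [star_trivial, dotProduct_comm, ← trace_vecMulVec, ← mul_vecMulVec, trace_mul_comm,
      ← integral_dotProduct_mulVec_self _ hU]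
    simp only [vecMulVec_mulVec, op_smul_eq_smul, dotProduct_smul, smul_eq_mul, dotProduct_comm a,
      pow_two]
  rw [hquad]
  exact integral_nonneg fun ω => sq_nonneg _

theorem trace_mul_secondMoment_le_add {S : Matrix α α ℝ} (hS : S.PosSemidef) {w d : Ω → α → ℝ}
    (hw : MemLp w 2 μ) (hd : MemLp d 2 μ) (horth : (S * secondMoment μ w d).trace = 0) :
    (S * secondMoment μ w w).trace ≤ (S * secondMoment μ (w + d) (w + d)).trace := by
  have horth' : (S * secondMoment μ d w).trace = 0 := by
    rw [← transpose_secondMoment, ← hS.isHermitian.eq, conjTranspose_eq_transpose_of_trivial,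
      ← transpose_mul, trace_transpose, trace_mul_comm, horth]
  have hdd := trace_mul_nonneg_of_posSemidef hS (posSemidef_secondMoment_self hd)
  rw [secondMoment_add_left hw hd (hw.add hd), secondMoment_add_right hw hw hd,
    secondMoment_add_right hd hw hd]
  simp only [Matrix.mul_add, trace_add]
  linarith

end SecondMoment

section NormalEquations

variable {Ω ι δ : Type*} {κ ζ : ι → Type*} [MeasurableSpace Ω] {μ : Measure Ω}
  [Fintype ι] [DecidableEq ι] [Fintype δ] [∀ i, Fintype (κ i)] [∀ i, Fintype (ζ i)]
  {e : Ω → δ → ℝ} {t : Ω → (Σ i, κ i) → ℝ} {L : Matrix (Σ i, ζ i) δ ℝ}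
  {S : Matrix (Σ i, ζ i) (Σ i, ζ i) ℝ} {F : ∀ i, Matrix (ζ i) (κ i) ℝ}

theorem blockDiag'_mul_secondMoment_eq_zero (he : MemLp e 2 μ) (ht : MemLp t 2 μ)
    (hF : khatriRao (secondMoment μ t t) S *ᵥ blockVec F
      = blockVec (blockDiag' (S * L * secondMoment μ e t))) :
    blockDiag' (S * secondMoment μ (fun ω => L *ᵥ e ω - blockDiagonal' F *ᵥ t ω) t) = 0 := by
  rw [khatriRao_mulVec_blockVec, transpose_secondMoment] at hF
  rw [← Pi.sub_def, secondMoment_sub_left (memLp_mulVec he L) (memLp_mulVec ht _) ht,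
    secondMoment_mulVec_left _ he ht, secondMoment_mulVec_left _ ht ht, Matrix.mul_sub,
    blockDiag'_sub, ← Matrix.mul_assoc, ← Matrix.mul_assoc, ← blockVec_injective hF, sub_self]

theorem trace_mul_secondMoment_normalEquations (hS : S.IsSymm) (he : MemLp e 2 μ)
    (ht : MemLp t 2 μ)
    (hF : khatriRao (secondMoment μ t t) S *ᵥ blockVec F
      = blockVec (blockDiag' (S * L * secondMoment μ e t))) :
    (S * secondMoment μ (fun ω => L *ᵥ e ω - blockDiagonal' F *ᵥ t ω)
      (fun ω => L *ᵥ e ω - blockDiagonal' F *ᵥ t ω)).trace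
      = (Lᵀ * S * L * secondMoment μ e e).trace
        - blockVec (blockDiag' (S * L * secondMoment μ e t)) ⬝ᵥ blockVec F := by
  have hLe : MemLp (fun ω => L *ᵥ e ω) 2 μ := memLp_mulVec he L
  have hFt : MemLp (fun ω => blockDiagonal' F *ᵥ t ω) 2 μ := memLp_mulVec ht _
  have horth := blockDiag'_mul_secondMoment_eq_zero he ht hF
  set w : Ω → (Σ i, ζ i) → ℝ := fun ω => L *ᵥ e ω - blockDiagonal' F *ᵥ t ω
  have hwLp : MemLp w 2 μ := hLe.sub hFt
  have hwt : (S * (secondMoment μ w t * (blockDiagonal' F)ᵀ)).trace = 0 := by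
    rw [← Matrix.mul_assoc, ← blockVec_blockDiag'_dotProduct_blockVec, horth]
    exact zero_dotProduct _
  have hcross : (S * (blockDiagonal' F * secondMoment μ t e * Lᵀ)).trace
      = blockVec (blockDiag' (S * L * secondMoment μ e t)) ⬝ᵥ blockVec F := by
    rw [blockVec_blockDiag'_dotProduct_blockVec, ← trace_transpose]
    simp only [transpose_mul, transpose_transpose, transpose_secondMoment, hS.eq]
    rw [trace_mul_comm]
    simp only [Matrix.mul_assoc]
  calc (S * secondMoment μ w w).trace
      = (S * (secondMoment μ w e * Lᵀ)).trace
        - (S * (secondMoment μ w t * (blockDiagonal' F)ᵀ)).trace := by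
        rw [← secondMoment_mulVec_right L hwLp he, ← secondMoment_mulVec_right _ hwLp ht,
          ← trace_sub, ← Matrix.mul_sub, ← secondMoment_sub_right hwLp hLe hFt]
        rfl
    _ = (S * (L * secondMoment μ e e * Lᵀ)).trace
        - (S * (blockDiagonal' F * secondMoment μ t e * Lᵀ)).trace := by
        rw [hwt, sub_zero, ← trace_sub, ← Matrix.mul_sub, ← Matrix.sub_mul,
          ← secondMoment_mulVec_left L he he, ← secondMoment_mulVec_left _ ht he,
          ← secondMoment_sub_left hLe hFt he]
        rfl
    _ = _ := by
        rw [hcross, ← Matrix.mul_assoc, trace_mul_comm]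
        simp only [Matrix.mul_assoc]

omit [DecidableEq ι] [∀ i, Fintype (ζ i)] in
theorem khatriRao_secondMoment_posDef [∀ i, DecidableEq (κ i)] [∀ i, Finite (ζ i)]
    (ht : MemLp t 2 μ)
    (hdet : ∀ i, IsUnit (blockDiag' (secondMoment μ t t) i).det) (hS : S.PosDef) :
    (khatriRao (secondMoment μ t t) S).PosDef := by
  have htt := posSemidef_secondMoment_self ht
  exact khatriRao_posDef htt (fun i => (htt.submatrix (Sigma.mk i)).posDef_iff_isUnit.2
    ((isUnit_iff_isUnit_det _).2 (hdet i))) hS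

theorem isUnit_det_of_apply_eq_integral_mul [∀ i, DecidableEq (κ i)] [∀ i, DecidableEq (ζ i)]
    {u : ∀ i, Ω → κ i → ℝ} (hu : ∀ i, MemLp (u i) 2 μ) {C : ∀ i j, Matrix (κ i) (κ j) ℝ}
    (hC : ∀ i j k l, C i j k l = ∫ ω, u i ω k * u j ω l ∂μ) (hdet : ∀ i, IsUnit (C i i).det)
    (hS : S.PosDef) {Γ : Matrix (Σ i, κ i × ζ i) (Σ i, κ i × ζ i) ℝ}
    (hΓ : ∀ i j c r c' r', Γ ⟨i, c, r⟩ ⟨j, c', r'⟩ = C i j c c' * S ⟨i, r⟩ ⟨j, r'⟩) :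
    IsUnit Γ.det := by
  let t (ω : Ω) (p : Σ i, κ i) : ℝ := u p.1 ω p.2
  have ht : MemLp t 2 μ := .of_eval fun p => (hu p.1).eval p.2
  obtain rfl : C = fun i j => (secondMoment μ t t).submatrix (Sigma.mk i) (Sigma.mk j) :=
    funext₂ fun i j => Matrix.ext (hC i j)
  obtain rfl : Γ = khatriRao (secondMoment μ t t) S :=
    Matrix.ext fun p p' => hΓ p.1 p'.1 p.2.1 p.2.2 p'.2.1 p'.2.2
  exact (isUnit_iff_isUnit_det _).1 (khatriRao_secondMoment_posDef ht hdet hS).isUnit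

end NormalEquations

section CondExp

variable {Ω α β : Type*} {m m₀ : MeasurableSpace Ω} {μ : Measure Ω}

/-- The coordinatewise conditional expectation `E[U | m]` of a random vector. -/
noncomputable def condExpPi (μ : Measure Ω) (m : MeasurableSpace Ω) (U : Ω → α → ℝ) : Ω → α → ℝ :=
  fun ω i => (μ[fun ω => U ω i | m]) ω

theorem measurable_condExpPi (U : Ω → α → ℝ) : Measurable[m] (condExpPi μ m U) :=
  @measurable_pi_lambda _ _ _ m _ _ fun _ => stronglyMeasurable_condExp.measurable

variable [Fintype α]

theorem memLp_condExpPi {U : Ω → α → ℝ} (hU : MemLp U 2 μ) : MemLp (condExpPi μ m U) 2 μ :=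
  .of_eval fun i => (hU.eval i).condExp one_le_two

theorem secondMoment_sub_condExpPi_eq_zero [Fintype β] [IsFiniteMeasure μ] {U : Ω → α → ℝ}
    {V : Ω → β → ℝ} (hU : MemLp U 2 μ) (hV : MemLp V 2 μ) (hm : m ≤ m₀) (hVm : Measurable[m] V) :
    secondMoment μ (U - condExpPi μ m U) V = 0 := by
  rw [secondMoment_sub_left hU (memLp_condExpPi hU) hV, sub_eq_zero]
  ext i j
  have hVj : StronglyMeasurable[m] fun ω => V ω j :=
    ((measurable_pi_apply j).comp hVm).stronglyMeasurable
  rw [secondMoment_apply, ← integral_condExp hm]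
  exact integral_congr_ae (condExp_mul_of_stronglyMeasurable_right hVj
    (integrable_eval_mul_eval hU hV i j) ((hU.eval i).integrable one_le_two))

/-- The innovation `U - E[U | y₀]` of a random vector relative to an observation `y₀`. -/
noncomputable def innovation (μ : Measure Ω) (y₀ : Ω → β → ℝ) (U : Ω → α → ℝ) : Ω → α → ℝ :=
  U - condExpPi μ (MeasurableSpace.comap y₀ inferInstance) U

theorem memLp_innovation {y₀ : Ω → β → ℝ} {U : Ω → α → ℝ} (hU : MemLp U 2 μ) :
    MemLp (innovation μ y₀ U) 2 μ :=
  hU.sub (memLp_condExpPi hU)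

theorem secondMoment_innovation_self_eq_zero [Fintype β] [IsFiniteMeasure μ] {y₀ : Ω → β → ℝ}
    {U : Ω → α → ℝ} (hU : MemLp U 2 μ) (hy₀ : MemLp y₀ 2 μ) (hy₀m : Measurable y₀) :
    secondMoment μ (innovation μ y₀ U) y₀ = 0 :=
  secondMoment_sub_condExpPi_eq_zero hU hy₀ hy₀m.comap_le (comap_measurable y₀)

theorem secondMoment_innovation_innovation {γ : Type*} [Fintype γ] [IsFiniteMeasure μ]
    {y₀ : Ω → β → ℝ} {U : Ω → α → ℝ} {W : Ω → γ → ℝ} (hU : MemLp U 2 μ) (hW : MemLp W 2 μ)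
    (hy₀m : Measurable y₀) :
    secondMoment μ (innovation μ y₀ U) (innovation μ y₀ W)
      = secondMoment μ U (innovation μ y₀ W) := by
  have hzero : secondMoment μ (innovation μ y₀ W)
      (condExpPi μ (MeasurableSpace.comap y₀ inferInstance) U) = 0 :=
    secondMoment_sub_condExpPi_eq_zero hW (memLp_condExpPi hU) hy₀m.comap_le
      (measurable_condExpPi U)
  nth_rw 1 [innovation]
  rw [secondMoment_sub_left hU (memLp_condExpPi hU) (memLp_innovation hW),
    ← transpose_secondMoment _ (condExpPi _ _ U), hzero, transpose_zero, sub_zero]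

end CondExp

section Regression

theorem exists_forall_inner_sub_sum_smul_eq_zero {E τ : Type*} [NormedAddCommGroup E]
    [InnerProductSpace ℝ E] [Fintype τ] (x : E) (v : τ → E) :
    ∃ c : τ → ℝ, ∀ j, inner ℝ (x - ∑ k, c k • v k) (v j) = 0 := by
  have : FiniteDimensional ℝ (Submodule.span ℝ (Set.range v)) :=
    .span_of_finite ℝ (Set.finite_range v)
  obtain ⟨r, hr, s, hs, rfl⟩ := (Submodule.span ℝ (Set.range v)).exists_add_mem_mem_orthogonal x
  obtain ⟨c, rfl⟩ := (Submodule.mem_span_range_iff_exists_fun ℝ).1 hr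
  refine ⟨c, fun j => ?_⟩
  rw [add_sub_cancel_left]
  exact Submodule.inner_left_of_mem_orthogonal (Submodule.subset_span (Set.mem_range_self j)) hs

variable {Ω α β : Type*} [MeasurableSpace Ω] {μ : Measure Ω} [Fintype α] [Fintype β]

theorem inner_toLp_eq_integral_mul {f g : Ω → ℝ} (hf : MemLp f 2 μ) (hg : MemLp g 2 μ) :
    inner ℝ hf.toLp hg.toLp = ∫ ω, f ω * g ω ∂μ := by
  rw [L2.inner_def]
  refine integral_congr_ae ?_
  filter_upwards [hf.coeFn_toLp, hg.coeFn_toLp] with ω hfω hgω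
  rw [hfω, hgω, Real.inner_apply]

theorem exists_secondMoment_sub_mulVec_eq_zero {X : Ω → α → ℝ} {Y : Ω → β → ℝ} (hX : MemLp X 2 μ)
    (hY : MemLp Y 2 μ) :
    ∃ B : Matrix α β ℝ, secondMoment μ (fun ω => X ω - B *ᵥ Y ω) Y = 0 := by
  choose b hb using fun i =>
    exists_forall_inner_sub_sum_smul_eq_zero (hX.eval i).toLp fun j => (hY.eval j).toLp
  refine ⟨.of b, ?_⟩
  rw [← Pi.sub_def, secondMoment_sub_left hX (memLp_mulVec hY _) hY,
    secondMoment_mulVec_left _ hY hY]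
  ext i j
  simpa only [inner_sub_left, sum_inner, real_inner_smul_left, inner_toLp_eq_integral_mul,
    Matrix.sub_apply, mul_apply, secondMoment_apply, of_apply, Matrix.zero_apply] using hb i j

end Regression

section GaussianSpace

variable {Ω σ τ : Type*}

theorem mulVec_mem [Fintype σ] {V : Submodule ℝ (Ω → ℝ)} (A : Matrix τ σ ℝ) {X : Ω → σ → ℝ}
    (hX : ∀ i, (fun ω => X ω i) ∈ V) (j : τ) : (fun ω => (A *ᵥ X ω) j) ∈ V := by
  have hsum : (fun ω => (A *ᵥ X ω) j) = ∑ i, A j i • fun ω => X ω i := by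
    ext ω
    simp [mulVec, dotProduct]
  rw [hsum]
  exact V.sum_mem fun i _ => V.smul_mem _ (hX i)

variable [MeasurableSpace Ω]

/-- A Gaussian space: a linear space of centered Gaussian random variables. It is also required to
be closed under almost sure modification, so that conditional expectations, which are only
determined almost surely, can belong to it. -/
structure IsGaussianSpace (V : Submodule ℝ (Ω → ℝ)) (μ : Measure Ω) : Prop where
  hasGaussianLaw : ∀ f ∈ V, HasGaussianLaw f μ
  integral_eq_zero : ∀ f ∈ V, ∫ ω, f ω ∂μ = 0
  mem_of_ae_eq : ∀ f ∈ V, ∀ g, f =ᵐ[μ] g → g ∈ V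

variable {μ : Measure Ω} {V : Submodule ℝ (Ω → ℝ)}

namespace IsGaussianSpace

theorem hasGaussianLaw_pi [Finite σ] (hV : IsGaussianSpace V μ) {X : Ω → σ → ℝ}
    (hX : ∀ i, (fun ω => X ω i) ∈ V) : HasGaussianLaw X μ := by
  classical
  have := Fintype.ofFinite σ
  have hXm : AEMeasurable X μ :=
    aemeasurable_pi_lambda _ fun i => (hV.hasGaussianLaw _ (hX i)).aemeasurable
  refine ⟨isGaussian_of_map_eq_gaussianReal fun ℓ => ?_⟩
  have hℓ : (ℓ ∘ X) ∈ V := by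
    convert mulVec_mem (.of fun (_ : Unit) i => ℓ (Pi.single i 1)) hX () using 1
    ext ω
    conv_lhs => rw [Function.comp_apply, ← Finset.univ_sum_single (X ω), map_sum]
    refine Finset.sum_congr rfl fun i _ => ?_
    rw [← mul_one (X ω i), ← smul_eq_mul, Pi.single_smul, map_smul, smul_eq_mul, smul_eq_mul,
      mul_comm]
    simp
  rw [AEMeasurable.map_map_of_aemeasurable (by fun_prop) hXm]
  exact ⟨_, _, (hV.hasGaussianLaw _ hℓ).map_eq_gaussianReal⟩

theorem memLp [Fintype σ] (hV : IsGaussianSpace V μ) {X : Ω → σ → ℝ}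
    (hX : ∀ i, (fun ω => X ω i) ∈ V) : MemLp X 2 μ :=
  (hV.hasGaussianLaw_pi hX).memLp_two

variable [Finite σ] [Finite τ] {X : Ω → σ → ℝ} {Y : Ω → τ → ℝ}

theorem indepFun [IsProbabilityMeasure μ] (hV : IsGaussianSpace V μ)
    (hX : ∀ i, (fun ω => X ω i) ∈ V) (hY : ∀ j, (fun ω => Y ω j) ∈ V)
    (h : secondMoment μ X Y = 0) : IndepFun X Y μ := by
  have := Fintype.ofFinite σ
  have := Fintype.ofFinite τ
  have hXY : HasGaussianLaw (fun ω => (X ω, Y ω)) μ :=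
    (hV.hasGaussianLaw_pi (X := fun ω => Sum.elim (X ω) (Y ω)) (Sum.rec hX hY)).map_equiv
      (ContinuousLinearEquiv.sumPiEquivProdPi ℝ σ τ fun _ => ℝ)
  refine hXY.indepFun_of_covariance_eval fun i j => ?_
  rw [covariance_eq_sub ((hV.memLp hX).eval i) ((hV.memLp hY).eval j),
    hV.integral_eq_zero _ (hX i), zero_mul, sub_zero]
  exact congrFun₂ h i j

theorem secondMoment_eq_zero_of_measurable [IsProbabilityMeasure μ] (hV : IsGaussianSpace V μ)
    (hX : ∀ i, (fun ω => X ω i) ∈ V) (hY : ∀ j, (fun ω => Y ω j) ∈ V) (hYm : Measurable Y)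
    (h : secondMoment μ X Y = 0) {ρ : Type*} {W : Ω → ρ → ℝ}
    (hW : Measurable[MeasurableSpace.comap Y inferInstance] W) :
    secondMoment μ X W = 0 := by
  have hind : IndepFun X W μ := (IndepFun_iff_Indep _ _ _).2 <|
    indep_of_indep_of_le_right ((IndepFun_iff_Indep _ _ _).1 (hV.indepFun hX hY h)) hW.comap_le
  have hWm : Measurable W := hW.mono hYm.comap_le le_rfl
  ext i j
  have hmul := (hind.comp (measurable_pi_apply i)
    (measurable_pi_apply j)).integral_fun_mul_eq_mul_integral
    (hV.hasGaussianLaw _ (hX i)).aemeasurable.aestronglyMeasurable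
    ((measurable_pi_apply j).comp hWm).aestronglyMeasurable
  simp only [Function.comp_apply] at hmul
  rw [secondMoment_apply, hmul, hV.integral_eq_zero _ (hX i), zero_mul]
  rfl

theorem condExpPi_mem [IsProbabilityMeasure μ] (hV : IsGaussianSpace V μ)
    (hX : ∀ i, (fun ω => X ω i) ∈ V) (hY : ∀ j, (fun ω => Y ω j) ∈ V) (hYm : Measurable Y) (i : σ) :
    (fun ω => condExpPi μ (MeasurableSpace.comap Y inferInstance) X ω i) ∈ V := by
  have := Fintype.ofFinite σ
  have := Fintype.ofFinite τ
  obtain ⟨B, hB⟩ := exists_secondMoment_sub_mulVec_eq_zero (hV.memLp hX) (hV.memLp hY)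
  have hBY := mulVec_mem B hY
  have hXint : Integrable (fun ω => X ω i) μ := (hV.hasGaussianLaw _ (hX i)).integrable
  have hBYint : Integrable (fun ω => (B *ᵥ Y ω) i) μ := (hV.hasGaussianLaw _ (hBY i)).integrable
  have hBYm : Measurable[MeasurableSpace.comap Y inferInstance] fun ω => (B *ᵥ Y ω) i :=
    (by fun_prop : Measurable fun v => (B *ᵥ v) i).comp (comap_measurable Y)
  refine hV.mem_of_ae_eq _ (hBY i) _ ?_
  refine ae_eq_condExp_of_forall_setIntegral_eq hYm.comap_le hXint
    (fun s _ _ => hBYint.integrableOn) (fun s hs _ => ?_)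
    hBYm.stronglyMeasurable.aestronglyMeasurable
  have hsm : Measurable[MeasurableSpace.comap Y inferInstance] (s.indicator fun _ => (1 : ℝ)) :=
    (@measurable_const _ _ _ (_) 1).indicator hs
  have hind : secondMoment μ (fun ω => X ω - B *ᵥ Y ω)
      (fun ω (_ : Unit) => s.indicator (fun _ => 1) ω) = 0 :=
    hV.secondMoment_eq_zero_of_measurable (fun k => V.sub_mem (hX k) (hBY k)) hY hYm hB
      (@measurable_pi_lambda _ _ _ (_) _ _ fun _ => hsm)
  have hmul (ω : Ω) : (X ω - B *ᵥ Y ω) i * s.indicator (fun _ => 1) ω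
      = s.indicator (fun ω => X ω i - (B *ᵥ Y ω) i) ω := by
    by_cases hω : ω ∈ s <;> simp [hω]
  rw [eq_comm, ← sub_eq_zero, ← integral_sub hXint.integrableOn hBYint.integrableOn,
    ← integral_indicator (hYm.comap_le _ hs)]
  simpa only [secondMoment_apply, hmul, Matrix.zero_apply] using congrFun₂ hind i ()

theorem innovation_mem [IsProbabilityMeasure μ] (hV : IsGaussianSpace V μ)
    (hX : ∀ i, (fun ω => X ω i) ∈ V) (hY : ∀ j, (fun ω => Y ω j) ∈ V) (hYm : Measurable Y) (i : σ) :
    (fun ω => innovation μ Y X ω i) ∈ V :=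
  V.sub_mem (hX i) (hV.condExpPi_mem hX hY hYm i)

end IsGaussianSpace

end GaussianSpace

section AeSpan

variable {Ω τ : Type*} [MeasurableSpace Ω] [Fintype τ] {μ : Measure Ω} {Z : Ω → τ → ℝ}

/-- The random variables that are almost surely a linear combination of the coordinates of `Z`. -/
def aeSpan (μ : Measure Ω) (Z : Ω → τ → ℝ) : Submodule ℝ (Ω → ℝ) where
  carrier := {f | ∃ c : τ → ℝ, f =ᵐ[μ] fun ω => c ⬝ᵥ Z ω}
  add_mem' := by
    rintro f g ⟨c, hc⟩ ⟨d, hd⟩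
    refine ⟨c + d, (hc.add hd).trans (.of_eq ?_)⟩
    simp only [add_dotProduct]
    rfl
  zero_mem' := ⟨0, .of_eq (by simp only [zero_dotProduct]; rfl)⟩
  smul_mem' := by
    rintro a f ⟨c, hc⟩
    refine ⟨a • c, (hc.const_smul a).trans (.of_eq ?_)⟩
    simp only [smul_dotProduct]
    rfl

theorem eval_mem_aeSpan (t : τ) : (fun ω => Z ω t) ∈ aeSpan μ Z := by
  classical
  exact ⟨Pi.single t 1, .of_eq (by simp only [single_dotProduct, one_mul])⟩

theorem isGaussianSpace_aeSpan
    (hZ : ∀ c : τ → ℝ, ∃ v : NNReal, μ.map (fun ω => c ⬝ᵥ Z ω) = gaussianReal 0 v) :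
    IsGaussianSpace (aeSpan μ Z) μ where
  hasGaussianLaw := by
    rintro f ⟨c, hc⟩
    obtain ⟨v, hv⟩ := hZ c
    exact HasGaussianLaw.congr ⟨hv ▸ inferInstance⟩ hc.symm
  integral_eq_zero := by
    rintro f ⟨c, hc⟩
    obtain ⟨v, hv⟩ := hZ c
    have hcZ : HasGaussianLaw (fun ω => c ⬝ᵥ Z ω) μ := ⟨hv ▸ inferInstance⟩
    calc ∫ ω, f ω ∂μ = ∫ ω, c ⬝ᵥ Z ω ∂μ := integral_congr_ae hc
      _ = ∫ r, r ∂(gaussianReal 0 v) := by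
        rw [← hv]
        exact (integral_map hcZ.aemeasurable aestronglyMeasurable_id).symm
      _ = 0 := integral_id_gaussianReal
  mem_of_ae_eq := by
    rintro f ⟨c, hc⟩ g hfg
    exact ⟨c, hfg.symm.trans hc⟩

theorem exists_isGaussianSpace {α β ι : Type*} {κ : ι → Type*} [Fintype α] [Fintype β] [Fintype ι]
    [∀ i, Fintype (κ i)] {X : Ω → α → ℝ} {Y : Ω → β → ℝ} {W : ∀ i, Ω → κ i → ℝ}
    (h : ∀ (a : α → ℝ) (b : β → ℝ) (c : ∀ i, κ i → ℝ), ∃ v : NNReal,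
      μ.map (fun ω => (∑ k, a k * X ω k) + (∑ k, b k * Y ω k) + ∑ i, ∑ k, c i k * W i ω k)
        = gaussianReal 0 v) :
    ∃ V : Submodule ℝ (Ω → ℝ), IsGaussianSpace V μ ∧ (∀ k, (fun ω => X ω k) ∈ V) ∧
      (∀ k, (fun ω => Y ω k) ∈ V) ∧ ∀ i k, (fun ω => W i ω k) ∈ V := by
  let Z (ω : Ω) : (α ⊕ β) ⊕ (Σ i, κ i) → ℝ :=
    Sum.elim (Sum.elim (X ω) (Y ω)) fun p => W p.1 ω p.2
  have hmem := eval_mem_aeSpan (μ := μ) (Z := Z)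
  refine ⟨aeSpan μ Z, isGaussianSpace_aeSpan fun c => ?_, fun k => hmem (.inl (.inl k)),
    fun k => hmem (.inl (.inr k)), fun i k => hmem (.inr ⟨i, k⟩)⟩
  simpa only [Z, dotProduct, Fintype.sum_sum_type, Fintype.sum_sigma, Sum.elim_inl, Sum.elim_inr]
    using h (fun k => c (.inl (.inl k))) (fun k => c (.inl (.inr k))) fun i k => c (.inr ⟨i, k⟩)

end AeSpan

section Team

variable {Ω ι κ₀ : Type*} {κ ζ : ι → Type*}

/-- A stacked decision `z` is decentralized when its block `zᵢ` is a measurable function of the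
common observation `y₀` and the local observation `yᵢ`. -/
def IsDecentralized (y₀ : Ω → κ₀ → ℝ) (y : Ω → (Σ i, κ i) → ℝ) (z : Ω → (Σ i, ζ i) → ℝ) : Prop :=
  ∀ i, Measurable[MeasurableSpace.comap (fun ω => (y₀ ω, fun c => y ω ⟨i, c⟩)) inferInstance]
    fun ω r => z ω ⟨i, r⟩

namespace IsDecentralized

variable {y₀ : Ω → κ₀ → ℝ} {y : Ω → (Σ i, κ i) → ℝ} {z z' : Ω → (Σ i, ζ i) → ℝ}

theorem local_observation : IsDecentralized y₀ y y :=
  fun _ => measurable_snd.comp (comap_measurable _)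

theorem of_measurable_comap (hz : Measurable[MeasurableSpace.comap y₀ inferInstance] z) :
    IsDecentralized y₀ y z :=
  fun i => (by fun_prop : Measurable fun (v : (Σ i, ζ i) → ℝ) r => v ⟨i, r⟩).comp <|
    hz.mono (Measurable.comap_le (measurable_fst.comp (comap_measurable fun ω =>
      (y₀ ω, fun c => y ω ⟨i, c⟩)))) le_rfl

theorem add (hz : IsDecentralized y₀ y z) (hz' : IsDecentralized y₀ y z') :
    IsDecentralized y₀ y (z + z') :=
  fun i => (hz i).add (hz' i)

theorem sub (hz : IsDecentralized y₀ y z) (hz' : IsDecentralized y₀ y z') :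
    IsDecentralized y₀ y (z - z') :=
  fun i => (hz i).sub (hz' i)

end IsDecentralized

theorem blockDiagonal'_mulVec_apply {R : Type*} [NonUnitalNonAssocSemiring R] [Fintype ι]
    [DecidableEq ι] [∀ i, Fintype (κ i)] (F : ∀ i, Matrix (ζ i) (κ i) R)
    (v : (Σ i, κ i) → R) (i : ι) (r : ζ i) :
    (blockDiagonal' F *ᵥ v) ⟨i, r⟩ = (F i *ᵥ fun c => v ⟨i, c⟩) r := by
  simp only [mulVec, dotProduct, Fintype.sum_sigma, blockDiagonal'_apply]
  rw [Finset.sum_eq_single i (fun k _ hk => by simp [hk.symm]) (by simp)]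
  simp

theorem IsDecentralized.blockDiagonal'_mulVec [Fintype ι] [DecidableEq ι] [∀ i, Fintype (κ i)]
    {ξ : ι → Type*} {y₀ : Ω → κ₀ → ℝ} {y : Ω → (Σ i, ξ i) → ℝ} {t : Ω → (Σ i, κ i) → ℝ}
    (F : ∀ i, Matrix (ζ i) (κ i) ℝ) (ht : IsDecentralized y₀ y t) :
    IsDecentralized y₀ y fun ω => blockDiagonal' F *ᵥ t ω := by
  intro i
  simp only [blockDiagonal'_mulVec_apply]
  exact (measurable_pi_lambda _ fun r => by fun_prop : Measurable fun v => F i *ᵥ v).comp (ht i)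

variable {δ : Type*} [MeasurableSpace Ω] {μ : Measure Ω} [Fintype ι] [Fintype δ]
  [∀ i, Fintype (κ i)] {x : Ω → δ → ℝ} {y₀ : Ω → κ₀ → ℝ} {y : Ω → (Σ i, κ i) → ℝ}
  {L : Matrix (Σ i, ζ i) δ ℝ} {S : Matrix (Σ i, ζ i) (Σ i, ζ i) ℝ}
  {F : ∀ i, Matrix (ζ i) (κ i) ℝ}

/-- The stacked decision with blocks `Lᵢ x̂₀ + Fᵢ ỹᵢ`, where `x̂₀ = E[x | y₀]` and `ỹᵢ` is the
innovation of `yᵢ` relative to `y₀`. -/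
noncomputable def teamEstimate [DecidableEq ι] (μ : Measure Ω) (y₀ : Ω → κ₀ → ℝ) (x : Ω → δ → ℝ)
    (y : Ω → (Σ i, κ i) → ℝ) (L : Matrix (Σ i, ζ i) δ ℝ) (F : ∀ i, Matrix (ζ i) (κ i) ℝ) :
    Ω → (Σ i, ζ i) → ℝ :=
  fun ω => L *ᵥ condExpPi μ (MeasurableSpace.comap y₀ inferInstance) x ω
    + blockDiagonal' F *ᵥ innovation μ y₀ y ω

theorem teamEstimate_apply [DecidableEq ι] (ω : Ω) (i : ι) (r : ζ i) :
    teamEstimate μ y₀ x y L F ω ⟨i, r⟩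
      = (L.submatrix (Sigma.mk i) id *ᵥ
            condExpPi μ (MeasurableSpace.comap y₀ inferInstance) x ω
          + F i *ᵥ fun c => innovation μ y₀ y ω ⟨i, c⟩) r := by
  rw [teamEstimate, Pi.add_apply, Pi.add_apply, blockDiagonal'_mulVec_apply]
  rfl

theorem mulVec_sub_teamEstimate [DecidableEq ι] :
    (fun ω => L *ᵥ x ω - teamEstimate μ y₀ x y L F ω)
      = fun ω => L *ᵥ innovation μ y₀ x ω - blockDiagonal' F *ᵥ innovation μ y₀ y ω := by
  funext ω
  rw [teamEstimate, ← sub_sub, ← mulVec_sub]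
  rfl

theorem isDecentralized_teamEstimate [DecidableEq ι] :
    IsDecentralized y₀ y (teamEstimate μ y₀ x y L F) := by
  refine .add (.of_measurable_comap ?_) (.blockDiagonal'_mulVec F (.sub .local_observation
    (.of_measurable_comap (measurable_condExpPi y))))
  exact (measurable_pi_lambda _ fun p => by fun_prop : Measurable fun v => L *ᵥ v).comp
    (measurable_condExpPi x)

variable [∀ i, Fintype (ζ i)]

/-- The expected team estimation error of a stacked decision `z`, weighted by `S`. -/
noncomputable def teamError (μ : Measure Ω) (S : Matrix (Σ i, ζ i) (Σ i, ζ i) ℝ)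
    (L : Matrix (Σ i, ζ i) δ ℝ) (x : Ω → δ → ℝ) (z : Ω → (Σ i, ζ i) → ℝ) : ℝ :=
  ∫ ω, (L *ᵥ x ω - z ω) ⬝ᵥ S *ᵥ (L *ᵥ x ω - z ω) ∂μ

theorem sum_sum_dotProduct_mulVec {R : Type*} [NonUnitalNonAssocSemiring R]
    (S : Matrix (Σ i, ζ i) (Σ i, ζ i) R) (u : ∀ i, ζ i → R) :
    ∑ i, ∑ j, u i ⬝ᵥ S.submatrix (Sigma.mk i) (Sigma.mk j) *ᵥ u j
      = (fun p : Σ i, ζ i => u p.1 p.2) ⬝ᵥ S *ᵥ fun p => u p.1 p.2 := by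
  simp only [dotProduct, mulVec, Fintype.sum_sigma, submatrix_apply, Finset.mul_sum]
  exact Finset.sum_congr rfl fun i _ => Finset.sum_comm

theorem integral_sum_sum_eq_teamError (z : ∀ i, Ω → ζ i → ℝ) :
    ∫ ω, ∑ i, ∑ j, (L.submatrix (Sigma.mk i) id *ᵥ x ω - z i ω) ⬝ᵥ
        S.submatrix (Sigma.mk i) (Sigma.mk j) *ᵥ (L.submatrix (Sigma.mk j) id *ᵥ x ω - z j ω) ∂μ
      = teamError μ S L x fun ω p => z p.1 ω p.2 :=
  integral_congr_ae (.of_forall fun ω => sum_sum_dotProduct_mulVec S fun i =>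
    L.submatrix (Sigma.mk i) id *ᵥ x ω - z i ω)

theorem teamError_eq_trace (S : Matrix (Σ i, ζ i) (Σ i, ζ i) ℝ) {w z : Ω → (Σ i, ζ i) → ℝ}
    (hw : (fun ω => L *ᵥ x ω - z ω) = w) (hwLp : MemLp w 2 μ) :
    teamError μ S L x z = (S * secondMoment μ w w).trace := by
  subst hw
  exact integral_dotProduct_mulVec_self S hwLp

theorem teamError_teamEstimate [DecidableEq ι] (hS : S.IsSymm) (hx : MemLp x 2 μ)
    (hy : MemLp y 2 μ)
    (hF : khatriRao (secondMoment μ (innovation μ y₀ y) (innovation μ y₀ y)) S *ᵥ blockVec F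
      = blockVec (blockDiag' (S * L * secondMoment μ (innovation μ y₀ x) (innovation μ y₀ y)))) :
    teamError μ S L x (teamEstimate μ y₀ x y L F)
      = (Lᵀ * S * L * secondMoment μ (innovation μ y₀ x) (innovation μ y₀ x)).trace
        - blockVec (blockDiag'
            (S * L * secondMoment μ (innovation μ y₀ x) (innovation μ y₀ y))) ⬝ᵥ blockVec F := by
  have he : MemLp (innovation μ y₀ x) 2 μ := memLp_innovation hx
  have ht : MemLp (innovation μ y₀ y) 2 μ := memLp_innovation hy
  rw [teamError_eq_trace S mulVec_sub_teamEstimate ((memLp_mulVec he L).sub (memLp_mulVec ht _)),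
    trace_mul_secondMoment_normalEquations hS he ht hF]

variable [IsProbabilityMeasure μ] [Finite κ₀] {V : Submodule ℝ (Ω → ℝ)}

theorem IsGaussianSpace.secondMoment_eq_zero_of_measurable_prodMk {ρ θ τ : Type*} [Finite ρ]
    [Finite τ] (hV : IsGaussianSpace V μ) (hy₀ : ∀ k, (fun ω => y₀ ω k) ∈ V) (hy₀m : Measurable y₀)
    {Y : Ω → τ → ℝ} (hY : ∀ k, (fun ω => Y ω k) ∈ V) (hYm : Measurable Y)
    {U : Ω → ρ → ℝ} (hU : ∀ k, (fun ω => U ω k) ∈ V) (hUy₀ : secondMoment μ U y₀ = 0)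
    (hUY : secondMoment μ U (innovation μ y₀ Y) = 0) {W : Ω → θ → ℝ}
    (hW : Measurable[MeasurableSpace.comap (fun ω => (y₀ ω, Y ω)) inferInstance] W) :
    secondMoment μ U W = 0 := by
  have := Fintype.ofFinite κ₀
  have := Fintype.ofFinite ρ
  have := Fintype.ofFinite τ
  have hYLp := hV.memLp hY
  have hUYhat : secondMoment μ U (condExpPi μ (MeasurableSpace.comap y₀ inferInstance) Y) = 0 :=
    hV.secondMoment_eq_zero_of_measurable hU hy₀ hy₀m hUy₀ (measurable_condExpPi Y)
  rw [innovation, secondMoment_sub_right (hV.memLp hU) hYLp (memLp_condExpPi hYLp), hUYhat,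
    sub_zero] at hUY
  have hpair : Measurable[MeasurableSpace.comap (fun ω => Sum.elim (y₀ ω) (Y ω)) inferInstance]
      fun ω => (y₀ ω, Y ω) :=
    (MeasurableEquiv.sumPiEquivProdPi fun _ : κ₀ ⊕ τ => ℝ).measurable.comp (comap_measurable _)
  refine hV.secondMoment_eq_zero_of_measurable (Y := fun ω => Sum.elim (y₀ ω) (Y ω)) hU
    (Sum.rec hy₀ hY) ?_ ?_ (hW.mono hpair.comap_le le_rfl)
  · exact measurable_pi_lambda _ <| Sum.rec (measurable_pi_iff.1 hy₀m) (measurable_pi_iff.1 hYm)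
  · ext k l
    cases l with
    | inl l => exact congrFun₂ hUy₀ k l
    | inr l => exact congrFun₂ hUY k l

omit [∀ i, Fintype (κ i)] in
theorem trace_mul_secondMoment_isDecentralized_eq_zero [∀ i, Finite (κ i)]
    (hV : IsGaussianSpace V μ) (hy₀ : ∀ k, (fun ω => y₀ ω k) ∈ V) (hy₀m : Measurable y₀)
    (hy : ∀ k, (fun ω => y ω k) ∈ V) (hym : Measurable y) {w d : Ω → (Σ i, ζ i) → ℝ}
    (hw : ∀ k, (fun ω => w ω k) ∈ V) (hwy₀ : secondMoment μ w y₀ = 0)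
    (hwy : blockDiag' (S * secondMoment μ w (innovation μ y₀ y)) = 0)
    (hd : IsDecentralized y₀ y d) (hdLp : MemLp d 2 μ) :
    (S * secondMoment μ w d).trace = 0 := by
  have := Fintype.ofFinite κ₀
  have (i : ι) := Fintype.ofFinite (κ i)
  have hwLp := hV.memLp hw
  have hyLp := hV.memLp hy
  have hblock (i : ι) :
      secondMoment μ (fun ω r => (S *ᵥ w ω) ⟨i, r⟩) (fun ω r => d ω ⟨i, r⟩) = 0 := by
    refine hV.secondMoment_eq_zero_of_measurable_prodMk hy₀ hy₀m
      (Y := fun ω c => y ω ⟨i, c⟩) (fun c => hy ⟨i, c⟩) (by fun_prop)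
      (fun r => mulVec_mem S hw ⟨i, r⟩) ?_ ?_ (hd i)
    · ext r k
      have h := secondMoment_mulVec_left S hwLp (hV.memLp hy₀)
      rw [hwy₀, Matrix.mul_zero] at h
      exact congrFun₂ h ⟨i, r⟩ k
    · rw [← secondMoment_mulVec_left S hwLp (memLp_innovation hyLp)] at hwy
      exact congrFun hwy i
  rw [← secondMoment_mulVec_left S hwLp hdLp, trace]
  exact Finset.sum_eq_zero fun p _ => congrFun₂ (hblock p.1) p.2 p.2

theorem teamError_teamEstimate_le [DecidableEq ι] (hV : IsGaussianSpace V μ)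
    (hx : ∀ k, (fun ω => x ω k) ∈ V) (hy₀ : ∀ k, (fun ω => y₀ ω k) ∈ V) (hy₀m : Measurable y₀)
    (hy : ∀ k, (fun ω => y ω k) ∈ V) (hym : Measurable y) (hS : S.PosSemidef)
    (hF : khatriRao (secondMoment μ (innovation μ y₀ y) (innovation μ y₀ y)) S *ᵥ blockVec F
      = blockVec (blockDiag' (S * L * secondMoment μ (innovation μ y₀ x) (innovation μ y₀ y))))
    {z : Ω → (Σ i, ζ i) → ℝ} (hz : IsDecentralized y₀ y z) (hzLp : MemLp z 2 μ) :
    teamError μ S L x (teamEstimate μ y₀ x y L F) ≤ teamError μ S L x z := by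
  have := Fintype.ofFinite κ₀
  have hy₀Lp := hV.memLp hy₀
  have heV := hV.innovation_mem hx hy₀ hy₀m
  have htV := hV.innovation_mem hy hy₀ hy₀m
  have heLp := hV.memLp heV
  have htLp := hV.memLp htV
  set w := fun ω => L *ᵥ innovation μ y₀ x ω - blockDiagonal' F *ᵥ innovation μ y₀ y ω with hw
  have hwV (k : Σ i, ζ i) : (fun ω => w ω k) ∈ V :=
    V.sub_mem (mulVec_mem L heV k) (mulVec_mem _ htV k)
  have hwLp := hV.memLp hwV
  have hwy₀ : secondMoment μ w y₀ = 0 := by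
    rw [hw, ← Pi.sub_def, secondMoment_sub_left (memLp_mulVec heLp L) (memLp_mulVec htLp _) hy₀Lp,
      secondMoment_mulVec_left _ heLp hy₀Lp, secondMoment_mulVec_left _ htLp hy₀Lp,
      secondMoment_innovation_self_eq_zero (hV.memLp hx) hy₀Lp hy₀m,
      secondMoment_innovation_self_eq_zero (hV.memLp hy) hy₀Lp hy₀m,
      Matrix.mul_zero, Matrix.mul_zero, sub_zero]
  have hwt := blockDiag'_mul_secondMoment_eq_zero heLp htLp hF
  have hest : w = (fun ω => L *ᵥ x ω) - teamEstimate μ y₀ x y L F := mulVec_sub_teamEstimate.symm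
  have hzw : (fun ω => L *ᵥ x ω) - z = w + (teamEstimate μ y₀ x y L F - z) := by
    rw [hest, sub_add_sub_cancel]
  have hLx : MemLp (fun ω => L *ᵥ x ω) 2 μ := memLp_mulVec (hV.memLp hx) L
  have hdLp : MemLp (teamEstimate μ y₀ x y L F - z) 2 μ := by
    rw [eq_sub_of_add_eq' hzw.symm]
    exact (hLx.sub hzLp).sub hwLp
  have horth := trace_mul_secondMoment_isDecentralized_eq_zero hV hy₀ hy₀m hy hym hwV hwy₀ hwt
    (isDecentralized_teamEstimate.sub hz) hdLp
  rw [teamError_eq_trace S mulVec_sub_teamEstimate hwLp,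
    teamError_eq_trace S hzw (hwLp.add hdLp)]
  exact trace_mul_secondMoment_le_add hS hwLp hdLp horth

end Team

theorem stmt14_general {Ω δ κ₀ ι : Type*} {κ ζ : ι → Type*} [MeasurableSpace Ω] (μ : Measure Ω)
    [IsProbabilityMeasure μ] [Fintype δ] [Fintype κ₀] [Fintype ι] [∀ i, Fintype (κ i)]
    [∀ i, Fintype (ζ i)]
    (x : Ω → δ → ℝ) (y0 : Ω → κ₀ → ℝ) (y : ∀ i, Ω → κ i → ℝ)
    (hy0 : Measurable y0) (hy : ∀ i, Measurable (y i))
    (hGauss : ∀ (a : δ → ℝ) (b0 : κ₀ → ℝ) (b : ∀ i, κ i → ℝ),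
      ∃ v : NNReal,
        μ.map (fun ω => (∑ k, a k * x ω k) + (∑ k, b0 k * y0 ω k)
          + ∑ i, ∑ k, b i k * y i ω k) = gaussianReal 0 v)
    (xhat0 : Ω → δ → ℝ)
    (hxhat0 : xhat0 = fun ω k =>
      (μ[(fun ω => x ω k) | MeasurableSpace.comap y0 inferInstance]) ω)
    (yhat : ∀ i, Ω → κ i → ℝ)
    (hyhat : ∀ i, yhat i = fun ω k =>
      (μ[(fun ω => y i ω k) | MeasurableSpace.comap y0 inferInstance]) ω)
    (Θhat : ∀ i, Matrix δ (κ i) ℝ)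
    (hΘhat : ∀ i k l, Θhat i k l = ∫ ω, x ω k * (y i ω l - yhat i ω l) ∂μ)
    (Sigmahat : ∀ i j, Matrix (κ i) (κ j) ℝ)
    (hSigmahat : ∀ i j k l, Sigmahat i j k l
      = ∫ ω, (y i ω k - yhat i ω k) * (y j ω l - yhat j ω l) ∂μ)
    (P0 : Matrix δ δ ℝ)
    (hP0 : ∀ k l, P0 k l = ∫ ω, (x ω k - xhat0 ω k) * (x ω l - xhat0 ω l) ∂μ)
    (L : ∀ i, Matrix (ζ i) δ ℝ) (S : ∀ i j, Matrix (ζ i) (ζ j) ℝ)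
    (Lbig : Matrix (Σ i, ζ i) δ ℝ) (hLbig : ∀ i r k, Lbig ⟨i, r⟩ k = L i r k)
    (Sbig : Matrix (Σ i, ζ i) (Σ i, ζ i) ℝ)
    (hSbig : ∀ i j r r', Sbig ⟨i, r⟩ ⟨j, r'⟩ = S i j r r') (hSpsd : Sbig.PosSemidef)
    (Γ : Matrix (Σ i, κ i × ζ i) (Σ i, κ i × ζ i) ℝ)
    (hΓ : ∀ i j c r c' r', Γ ⟨i, (c, r)⟩ ⟨j, (c', r')⟩ = Sigmahat i j c c' * S i j r r')
    (η : (Σ i, κ i × ζ i) → ℝ)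
    (hη : ∀ i c r, η ⟨i, (c, r)⟩ = ((∑ j, S i j * L j) * Θhat i) r c)
    (F : ∀ i, Matrix (ζ i) (κ i) ℝ)
    (hF : Γ *ᵥ (fun p => F p.1 p.2.2 p.2.1) = η)
    (J : (∀ i, Ω → ζ i → ℝ) → ℝ)
    (hJ : ∀ z, J z = ∫ ω, ∑ i, ∑ j,
      ((L i).mulVec (x ω) - z i ω) ⬝ᵥ (S i j).mulVec ((L j).mulVec (x ω) - z j ω) ∂μ) :
    J (fun i ω => (L i).mulVec (xhat0 ω)
          + (F i).mulVec (fun l => y i ω l - yhat i ω l))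
      = (Lbigᵀ * Sbig * Lbig * P0).trace - η ⬝ᵥ (fun p => F p.1 p.2.2 p.2.1) ∧
    ∀ g : ∀ i, (κ₀ → ℝ) × (κ i → ℝ) → ζ i → ℝ,
      (∀ i, Measurable (g i)) →
      (∀ i k, MemLp (fun ω => g i (y0 ω, y i ω) k) 2 μ) →
      J (fun i ω => (L i).mulVec (xhat0 ω)
            + (F i).mulVec (fun l => y i ω l - yhat i ω l))
        ≤ J (fun i ω => g i (y0 ω, y i ω)) := by
  classical
  set Y : Ω → (Σ i, κ i) → ℝ := fun ω p => y p.1 ω p.2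
  have hYm : Measurable Y := measurable_pi_lambda _ fun p => measurable_pi_iff.1 (hy p.1) p.2
  obtain ⟨V, hV, hxV, hy0V, hyV⟩ := exists_isGaussianSpace hGauss
  have hYV (p : Σ i, κ i) : (fun ω => Y ω p) ∈ V := hyV p.1 p.2
  obtain rfl : L = fun i => Lbig.submatrix (Sigma.mk i) id :=
    funext fun i => Matrix.ext fun r k => (hLbig i r k).symm
  obtain rfl : S = fun i j => Sbig.submatrix (Sigma.mk i) (Sigma.mk j) :=
    funext₂ fun i j => Matrix.ext fun r r' => (hSbig i j r r').symm
  subst hxhat0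
  obtain rfl : yhat = fun i ω c =>
    condExpPi μ (MeasurableSpace.comap y0 inferInstance) Y ω ⟨i, c⟩ := funext hyhat
  obtain rfl : P0 = secondMoment μ (innovation μ y0 x) (innovation μ y0 x) := Matrix.ext hP0
  obtain rfl : Γ = khatriRao (secondMoment μ (innovation μ y0 Y) (innovation μ y0 Y)) Sbig := by
    ext ⟨i, c, r⟩ ⟨j, c', r'⟩
    rw [hΓ, hSigmahat]
    rfl
  obtain rfl : Θhat = fun i =>
      (secondMoment μ x (innovation μ y0 Y)).submatrix id (Sigma.mk i) :=
    funext fun i => Matrix.ext (hΘhat i)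
  obtain rfl : η = blockVec
      (blockDiag' (Sbig * Lbig * secondMoment μ (innovation μ y0 x) (innovation μ y0 Y))) := by
    ext ⟨i, c, r⟩
    rw [hη, secondMoment_innovation_innovation (hV.memLp hxV) (hV.memLp hYV) hy0,
      blockVec_blockDiag'_mul_mul_apply]
  have hJ' (z : ∀ i, Ω → ζ i → ℝ) : J z = teamError μ Sbig Lbig x fun ω p => z p.1 ω p.2 :=
    (hJ z).trans (integral_sum_sum_eq_teamError z)
  have hest : J (fun i ω => Lbig.submatrix (Sigma.mk i) id *ᵥ
        condExpPi μ (MeasurableSpace.comap y0 inferInstance) x ω + F i *ᵥ fun c =>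
          y i ω c - condExpPi μ (MeasurableSpace.comap y0 inferInstance) Y ω ⟨i, c⟩)
      = teamError μ Sbig Lbig x (teamEstimate μ y0 x Y Lbig F) := by
    rw [hJ']
    exact congrArg _ (funext₂ fun ω ⟨i, r⟩ =>
      (teamEstimate_apply (L := Lbig) (y := Y) ω i r).symm)
  refine ⟨hest.trans (teamError_teamEstimate (by simpa using hSpsd.isHermitian) (hV.memLp hxV)
    (hV.memLp hYV) hF), fun g hg hgLp => ?_⟩
  refine hest.trans_le ((teamError_teamEstimate_le hV hxV hy0V hy0 hYV hYm hSpsd hF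
    (fun i => (hg i).comp (comap_measurable _)) (.of_eval fun p => hgLp p.1 p.2)).trans_eq
    (hJ' fun i ω => g i (y0 ω, y i ω)).symm)

/-- Multi-agent Gaussian estimation: the minimum expected team estimation error, achieved
by the strategy `ẑᵢ = Lᵢ x̂₀ + Fᵢ ỹᵢ` with `vec(F₁,…,Fₙ) = Γ⁻¹ η`, equals
`J* = Tr(Lᵀ S L P₀) − ηᵀ Γ⁻¹ η`, where `P₀ = Var(x − x̂₀)`,
`η = vec(S₁• L Θ̂₁, …, Sₙ• L Θ̂ₙ)` and `Γ` has blocks `Γᵢⱼ = Σ̂ᵢⱼ ⊗ Sᵢⱼ`. -/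
theorem stmt14 {Ω : Type*} [MeasurableSpace Ω] (μ : Measure Ω) [IsProbabilityMeasure μ]
    (dx q n : ℕ) (dy dz : Fin n → ℕ)
    (x : Ω → Fin dx → ℝ) (y0 : Ω → Fin q → ℝ) (y : ∀ i : Fin n, Ω → Fin (dy i) → ℝ)
    (hx : Measurable x) (hy0 : Measurable y0) (hy : ∀ i, Measurable (y i))
    (hGauss : ∀ (a : Fin dx → ℝ) (b0 : Fin q → ℝ) (b : ∀ i, Fin (dy i) → ℝ),
      ∃ v : NNReal,
        μ.map (fun ω => (∑ k, a k * x ω k) + (∑ k, b0 k * y0 ω k)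
          + ∑ i, ∑ k, b i k * y i ω k) = gaussianReal 0 v)
    (Sigma00 : Matrix (Fin q) (Fin q) ℝ)
    (hSigma00 : ∀ k l, Sigma00 k l = ∫ ω, y0 ω k * y0 ω l ∂μ)
    (hinv0 : IsUnit Sigma00.det)
    (xhat0 : Ω → Fin dx → ℝ)
    (hxhat0 : xhat0 = fun ω k =>
      (μ[(fun ω => x ω k) | MeasurableSpace.comap y0 inferInstance]) ω)
    (yhat : ∀ i : Fin n, Ω → Fin (dy i) → ℝ)
    (hyhat : ∀ i, yhat i = fun ω k =>
      (μ[(fun ω => y i ω k) | MeasurableSpace.comap y0 inferInstance]) ω)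
    (Θhat : ∀ i, Matrix (Fin dx) (Fin (dy i)) ℝ)
    (hΘhat : ∀ i k l, Θhat i k l = ∫ ω, x ω k * (y i ω l - yhat i ω l) ∂μ)
    (Sigmahat : ∀ i j, Matrix (Fin (dy i)) (Fin (dy j)) ℝ)
    (hSigmahat : ∀ i j k l, Sigmahat i j k l
      = ∫ ω, (y i ω k - yhat i ω k) * (y j ω l - yhat j ω l) ∂μ)
    (hinv : ∀ i, IsUnit (Sigmahat i i).det)
    (P0 : Matrix (Fin dx) (Fin dx) ℝ)
    (hP0 : ∀ k l, P0 k l = ∫ ω, (x ω k - xhat0 ω k) * (x ω l - xhat0 ω l) ∂μ)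
    (L : ∀ i : Fin n, Matrix (Fin (dz i)) (Fin dx) ℝ)
    (S : ∀ i j : Fin n, Matrix (Fin (dz i)) (Fin (dz j)) ℝ)
    (Lbig : Matrix (Σ i : Fin n, Fin (dz i)) (Fin dx) ℝ)
    (hLbig : ∀ (i : Fin n) (r : Fin (dz i)) (k : Fin dx), Lbig ⟨i, r⟩ k = L i r k)
    (Sbig : Matrix (Σ i : Fin n, Fin (dz i)) (Σ i : Fin n, Fin (dz i)) ℝ)
    (hSbig : ∀ (i j : Fin n) (r : Fin (dz i)) (r' : Fin (dz j)),
      Sbig ⟨i, r⟩ ⟨j, r'⟩ = S i j r r')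
    (hSpd : Sbig.PosDef)
    (Γ : Matrix (Σ i : Fin n, Fin (dy i) × Fin (dz i))
        (Σ j : Fin n, Fin (dy j) × Fin (dz j)) ℝ)
    (hΓ : ∀ (i j : Fin n) (c : Fin (dy i)) (r : Fin (dz i))
        (c' : Fin (dy j)) (r' : Fin (dz j)),
      Γ ⟨i, (c, r)⟩ ⟨j, (c', r')⟩ = Sigmahat i j c c' * S i j r r')
    (η : (Σ i : Fin n, Fin (dy i) × Fin (dz i)) → ℝ)
    (hη : ∀ (i : Fin n) (c : Fin (dy i)) (r : Fin (dz i)),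
      η ⟨i, (c, r)⟩ = ((∑ j, S i j * L j) * Θhat i) r c)
    (F : ∀ i : Fin n, Matrix (Fin (dz i)) (Fin (dy i)) ℝ)
    (hF : (fun p : Σ i : Fin n, Fin (dy i) × Fin (dz i) => F p.1 p.2.2 p.2.1)
      = Γ⁻¹.mulVec η)
    (J : (∀ i : Fin n, Ω → Fin (dz i) → ℝ) → ℝ)
    (hJ : ∀ z, J z = ∫ ω, ∑ i, ∑ j,
      ((L i).mulVec (x ω) - z i ω) ⬝ᵥ (S i j).mulVec ((L j).mulVec (x ω) - z j ω) ∂μ) :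
    J (fun i ω => (L i).mulVec (xhat0 ω)
          + (F i).mulVec (fun l => y i ω l - yhat i ω l))
      = (Lbigᵀ * Sbig * Lbig * P0).trace - η ⬝ᵥ Γ⁻¹.mulVec η ∧
    ∀ g : ∀ i : Fin n, (Fin q → ℝ) × (Fin (dy i) → ℝ) → Fin (dz i) → ℝ,
      (∀ i, Measurable (g i)) →
      (∀ i k, MemLp (fun ω => g i (y0 ω, y i ω) k) 2 μ) →
      J (fun i ω => (L i).mulVec (xhat0 ω)
            + (F i).mulVec (fun l => y i ω l - yhat i ω l))
        ≤ J (fun i ω => g i (y0 ω, y i ω)) := by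
  obtain ⟨V, hV, -, -, hyV⟩ := exists_isGaussianSpace hGauss
  have hyLp (i : Fin n) : MemLp (y i) 2 μ := hV.memLp (hyV i)
  have hΓdet : IsUnit Γ.det := isUnit_det_of_apply_eq_integral_mul
    (fun i => (hyLp i).sub (hyhat i ▸ memLp_condExpPi (hyLp i))) hSigmahat hinv hSpd
    (by simpa only [hSbig] using hΓ)
  rw [← hF]
  exact stmt14_general μ x y0 y hy0 hy hGauss xhat0 hxhat0 yhat hyhat Θhat hΘhat Sigmahat
    hSigmahat P0 hP0 L S Lbig hLbig Sbig hSbig hSpd.posSemidef Γ hΓ η hη F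
    (by rw [hF, mulVec_mulVec, mul_nonsing_inv _ hΓdet, one_mulVec]) J hJ
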